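/- arXiv:1610.06390 — 5 statements merged into one kernel-verified Lean document; each statement's English description precedes it below -/
import Mathlib

section
/- The 4-forms θ0i∧θ1i, θ0j∧θ1j, θ0k∧θ1k are all equal: θ0i∧θ1i = θ0j∧θ1j = θ0k∧θ1k. -/
/-!
Each `θ1q` is `D θ0q` for the even derivation `D` with `dy_m ↦ dx_m` and `dx_m ↦ 0`. Each `θ0q` has
the shape `a ∧ b - c ∧ d`, where `a = dy1` and `(b, c, d)` is a cyclic permutation of
`(dy2, dy3, dy4)`. As decomposable 2-vectors are central and `(a ∧ b) ∧ D (a ∧ b) = 0`, only the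
cross terms of `θ0q ∧ D θ0q` survive. They add up to `-D (a ∧ b ∧ c ∧ d)`, which the cyclic
permutations of `(b, c, d)` leave fixed.
-/

noncomputable section

open ExteriorAlgebra

/-- Basis 1-forms of the dual of `ℝ^8`, modelled as generators of the exterior algebra of an
8-dimensional real vector space. -/
def e8 (i : Fin 8) : ExteriorAlgebra ℝ (Fin 8 → ℝ) :=
  ExteriorAlgebra.ι ℝ (Pi.single i 1)

def dx1 : ExteriorAlgebra ℝ (Fin 8 → ℝ) := e8 0
def dx2 : ExteriorAlgebra ℝ (Fin 8 → ℝ) := e8 1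
def dx3 : ExteriorAlgebra ℝ (Fin 8 → ℝ) := e8 2
def dx4 : ExteriorAlgebra ℝ (Fin 8 → ℝ) := e8 3
def dy1 : ExteriorAlgebra ℝ (Fin 8 → ℝ) := e8 4
def dy2 : ExteriorAlgebra ℝ (Fin 8 → ℝ) := e8 5
def dy3 : ExteriorAlgebra ℝ (Fin 8 → ℝ) := e8 6
def dy4 : ExteriorAlgebra ℝ (Fin 8 → ℝ) := e8 7

def θ0i : ExteriorAlgebra ℝ (Fin 8 → ℝ) := dy1 * dy2 - dy3 * dy4
def θ0j : ExteriorAlgebra ℝ (Fin 8 → ℝ) := dy1 * dy3 + dy2 * dy4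
def θ0k : ExteriorAlgebra ℝ (Fin 8 → ℝ) := dy1 * dy4 - dy2 * dy3
def θ1i : ExteriorAlgebra ℝ (Fin 8 → ℝ) := dy1 * dx2 - dy2 * dx1 + dy4 * dx3 - dy3 * dx4
def θ1j : ExteriorAlgebra ℝ (Fin 8 → ℝ) := dy1 * dx3 + dy2 * dx4 - dy3 * dx1 - dy4 * dx2
def θ1k : ExteriorAlgebra ℝ (Fin 8 → ℝ) := dy1 * dx4 - dy4 * dx1 + dy3 * dx2 - dy2 * dx3
def θ2i : ExteriorAlgebra ℝ (Fin 8 → ℝ) := dx1 * dx2 - dx3 * dx4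
def θ2j : ExteriorAlgebra ℝ (Fin 8 → ℝ) := dx1 * dx3 + dx2 * dx4
def θ2k : ExteriorAlgebra ℝ (Fin 8 → ℝ) := dx1 * dx4 - dx2 * dx3
def θs : ExteriorAlgebra ℝ (Fin 8 → ℝ) := -(dy1 * dx1 + dy2 * dx2 + dy3 * dx3 + dy4 * dx4)

section ExteriorAlgebra

variable {R M : Type*} [CommRing R] [AddCommGroup M] [Module R M]

lemma ι_mul_ι_swap (a b : M) : ι R a * ι R b = -(ι R b * ι R a) :=
  eq_neg_of_add_eq_zero_left (ι_add_mul_swap a b)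

lemma commute_ι_mul_ι (a b : M) (w : ExteriorAlgebra R M) : Commute (ι R a * ι R b) w := by
  induction w using ExteriorAlgebra.induction with
  | algebraMap r => exact Algebra.commute_algebraMap_right r _
  | ι c =>
    calc ι R a * ι R b * ι R c
        = -(ι R a * ι R c * ι R b) := by rw [mul_assoc, ι_mul_ι_swap b c, mul_neg, ← mul_assoc]
      _ = ι R c * (ι R a * ι R b) := by rw [ι_mul_ι_swap a c, neg_mul, neg_neg, mul_assoc]
  | mul v w hv hw => exact hv.mul_right hw
  | add v w hv hw => exact hv.add_right hw

lemma ι_mul_ι_mul_rotate (a b c d : M) :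
    ι R a * ι R b * (ι R c * ι R d) = ι R a * ι R c * (ι R d * ι R b) := by
  rw [mul_assoc, ← (commute_ι_mul_ι c d (ι R b)).eq]
  simp only [mul_assoc]

/-- The algebra morphism `w ↦ w + ε D w` into the dual numbers over the exterior algebra, where `D`
is the derivation extending `f`; its multiplicativity is the Leibniz rule for `D`. -/
def dualNumberLift (f : M →ₗ[R] M) : ExteriorAlgebra R M →ₐ[R] DualNumber (ExteriorAlgebra R M) :=
  ExteriorAlgebra.lift R
    ⟨(TrivSqZeroExt.inlAlgHom R (ExteriorAlgebra R M) (ExteriorAlgebra R M)).toLinearMap ∘ₗ ι R +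
      (TrivSqZeroExt.inrHom (ExteriorAlgebra R M) (ExteriorAlgebra R M)).restrictScalars R ∘ₗ
        ι R ∘ₗ f, fun m ↦ by ext <;> simp⟩

lemma dualNumberLift_ι (f : M →ₗ[R] M) (m : M) :
    dualNumberLift f (ι R m) = TrivSqZeroExt.inl (ι R m) + TrivSqZeroExt.inr (ι R (f m)) := by
  simp [dualNumberLift]

lemma fst_dualNumberLift (f : M →ₗ[R] M) (w : ExteriorAlgebra R M) :
    (dualNumberLift f w).fst = w := by
  have fst_comp_lift :
      (TrivSqZeroExt.fstHom R _ _).comp (dualNumberLift f) = AlgHom.id R _ := by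
    ext m
    simp [dualNumberLift_ι]
  exact DFunLike.congr_fun fst_comp_lift w

/-- The derivation of degree zero of the exterior algebra that extends the endomorphism `f`. It is a
bare linear map because Mathlib's `Derivation` requires a commutative algebra. -/
def exteriorDerivation (f : M →ₗ[R] M) : ExteriorAlgebra R M →ₗ[R] ExteriorAlgebra R M :=
  (TrivSqZeroExt.sndHom (ExteriorAlgebra R M) (ExteriorAlgebra R M)).restrictScalars R ∘ₗ
    (dualNumberLift f).toLinearMap

lemma exteriorDerivation_ι (f : M →ₗ[R] M) (m : M) :
    exteriorDerivation f (ι R m) = ι R (f m) := by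
  simp [exteriorDerivation, dualNumberLift_ι]

lemma exteriorDerivation_mul (f : M →ₗ[R] M) (v w : ExteriorAlgebra R M) :
    exteriorDerivation f (v * w) = v * exteriorDerivation f w + exteriorDerivation f v * w := by
  simp [exteriorDerivation, fst_dualNumberLift]

lemma ι_mul_ι_mul_exteriorDerivation_self (f : M →ₗ[R] M) (a b : M) :
    ι R a * ι R b * exteriorDerivation f (ι R a * ι R b) = 0 := by
  have left_term : ι R a * ι R b * (ι R a * ι R (f b)) = 0 := by
    rw [← mul_assoc, (commute_ι_mul_ι a b (ι R a)).eq, ← mul_assoc, ι_sq_zero, zero_mul, zero_mul]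
  have right_term : ι R a * ι R b * (ι R (f a) * ι R b) = 0 := by
    rw [mul_assoc, ← (commute_ι_mul_ι (f a) b (ι R b)).eq, mul_assoc, ι_sq_zero, mul_zero, mul_zero]
  rw [exteriorDerivation_mul, exteriorDerivation_ι, exteriorDerivation_ι, mul_add, left_term,
    right_term, add_zero]

variable (R) in
/-- The 2-vector `a ∧ b - c ∧ d`, which is anti-self-dual when `a, b, c, d` is an oriented
orthonormal basis of a Euclidean 4-space. Each `θ0q` is one of these in the `dy_m`. -/
def antiSelfDualBivector (a b c d : M) : ExteriorAlgebra R M :=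
  ι R a * ι R b - ι R c * ι R d

lemma antiSelfDualBivector_mul_exteriorDerivation (f : M →ₗ[R] M) (a b c d : M) :
    antiSelfDualBivector R a b c d * exteriorDerivation f (antiSelfDualBivector R a b c d) =
      -exteriorDerivation f (ι R a * ι R b * (ι R c * ι R d)) := by
  rw [antiSelfDualBivector, map_sub, sub_mul, mul_sub, mul_sub,
    ι_mul_ι_mul_exteriorDerivation_self, ι_mul_ι_mul_exteriorDerivation_self,
    (commute_ι_mul_ι c d _).eq, exteriorDerivation_mul f (ι R a * ι R b)]
  abel

lemma antiSelfDualBivector_mul_exteriorDerivation_rotate (f : M →ₗ[R] M) (a b c d : M) :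
    antiSelfDualBivector R a b c d * exteriorDerivation f (antiSelfDualBivector R a b c d) =
      antiSelfDualBivector R a c d b * exteriorDerivation f (antiSelfDualBivector R a c d b) := by
  rw [antiSelfDualBivector_mul_exteriorDerivation, antiSelfDualBivector_mul_exteriorDerivation,
    ι_mul_ι_mul_rotate]

end ExteriorAlgebra

lemma e8_mul_swap (i j : Fin 8) : e8 i * e8 j = -(e8 j * e8 i) :=
  ι_mul_ι_swap _ _

/-- The endomorphism of the space of 1-forms with `dy_m ↦ dx_m` and `dx_m ↦ 0`. -/
def dyToDx : (Fin 8 → ℝ) →ₗ[ℝ] (Fin 8 → ℝ) :=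
  (Pi.basisFun ℝ (Fin 8)).constr ℝ (Fin.append 0 fun m : Fin 4 ↦ Pi.single (m.castAdd 4) 1)

lemma exteriorDerivation_dyToDx_e8 (m : Fin 4) :
    exteriorDerivation dyToDx (e8 (m.natAdd 4)) = e8 (m.castAdd 4) := by
  have dyToDx_single : dyToDx (Pi.single (m.natAdd 4) 1) = Pi.single (m.castAdd 4) 1 := by
    rw [dyToDx, ← Pi.basisFun_apply, Module.Basis.constr_basis, Fin.append_right]
  rw [e8, exteriorDerivation_ι, dyToDx_single, e8]

lemma exteriorDerivation_dy_mul_dy (m n : Fin 4) :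
    exteriorDerivation dyToDx (e8 (m.natAdd 4) * e8 (n.natAdd 4)) =
      e8 (m.natAdd 4) * e8 (n.castAdd 4) - e8 (n.natAdd 4) * e8 (m.castAdd 4) := by
  rw [exteriorDerivation_mul, exteriorDerivation_dyToDx_e8, exteriorDerivation_dyToDx_e8,
    e8_mul_swap (m.castAdd 4), sub_eq_add_neg]

lemma θ0i_eq_antiSelfDualBivector :
    θ0i = antiSelfDualBivector ℝ (Pi.single 4 1) (Pi.single 5 1) (Pi.single 6 1) (Pi.single 7 1) :=
  rfl

lemma θ0j_eq_antiSelfDualBivector :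
    θ0j = antiSelfDualBivector ℝ (Pi.single 4 1) (Pi.single 6 1) (Pi.single 7 1)
      (Pi.single 5 1) := by
  rw [θ0j, dy2, dy4, e8_mul_swap 5 7, ← sub_eq_add_neg]
  rfl

lemma θ0k_eq_antiSelfDualBivector :
    θ0k = antiSelfDualBivector ℝ (Pi.single 4 1) (Pi.single 7 1) (Pi.single 5 1) (Pi.single 6 1) :=
  rfl

lemma exteriorDerivation_θ0i : exteriorDerivation dyToDx θ0i = θ1i := by
  have h12 : exteriorDerivation dyToDx (dy1 * dy2) = dy1 * dx2 - dy2 * dx1 :=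
    exteriorDerivation_dy_mul_dy 0 1
  have h34 : exteriorDerivation dyToDx (dy3 * dy4) = dy3 * dx4 - dy4 * dx3 :=
    exteriorDerivation_dy_mul_dy 2 3
  rw [θ0i, map_sub, h12, h34, θ1i]
  abel

lemma exteriorDerivation_θ0j : exteriorDerivation dyToDx θ0j = θ1j := by
  have h13 : exteriorDerivation dyToDx (dy1 * dy3) = dy1 * dx3 - dy3 * dx1 :=
    exteriorDerivation_dy_mul_dy 0 2
  have h24 : exteriorDerivation dyToDx (dy2 * dy4) = dy2 * dx4 - dy4 * dx2 :=
    exteriorDerivation_dy_mul_dy 1 3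
  rw [θ0j, map_add, h13, h24, θ1j]
  abel

lemma exteriorDerivation_θ0k : exteriorDerivation dyToDx θ0k = θ1k := by
  have h14 : exteriorDerivation dyToDx (dy1 * dy4) = dy1 * dx4 - dy4 * dx1 :=
    exteriorDerivation_dy_mul_dy 0 3
  have h23 : exteriorDerivation dyToDx (dy2 * dy3) = dy2 * dx3 - dy3 * dx2 :=
    exteriorDerivation_dy_mul_dy 1 2
  rw [θ0k, map_sub, h14, h23, θ1k]
  abel

theorem theta0_theta1_diag :
    θ0i * θ1i = θ0j * θ1j ∧ θ0j * θ1j = θ0k * θ1k := by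
  rw [← exteriorDerivation_θ0i, ← exteriorDerivation_θ0j, ← exteriorDerivation_θ0k,
    θ0i_eq_antiSelfDualBivector, θ0j_eq_antiSelfDualBivector, θ0k_eq_antiSelfDualBivector]
  exact ⟨antiSelfDualBivector_mul_exteriorDerivation_rotate dyToDx _ _ _ _,
    antiSelfDualBivector_mul_exteriorDerivation_rotate dyToDx _ _ _ _⟩

end
end

section
/- One has θ1i∧θ1i − 2·θ0j∧θ2j − 2·θ0k∧θ2k − θs∧θs = 0, and the identities obtained by cyclically permuting (i,j,k) hold as well. -/
/-!
Write `x`, `y` for the two quadruples of 1-forms and `I` for the complex structure on quadruples,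
so that `θ1i = ∑ y_p ∧ (I x)_p` and `θs = -∑ y_p ∧ x_p`. Since 1-forms anticommute,
`(∑ v_p ∧ w_p)² = -∑ (v_p ∧ v_q) ∧ (w_p ∧ w_q)`, whence
`θ1i² - θs² = ∑ (y_p ∧ y_q) ∧ (x_p ∧ x_q - (I x)_p ∧ (I x)_q)`.
The involution induced by `I` on 2-forms in the `x_p` has `-1`-eigenspace spanned by `θ2j` and
`θ2k`, so the second factor is a combination of these two, and summing its coefficients against
`y_p ∧ y_q` gives `2 θ0j` and `2 θ0k`. Cyclically permuting `i, j, k` amounts to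
cyclically permuting the last three entries of both quadruples.
-/

noncomputable section

open ExteriorAlgebra

namespace QuaternionicForms

section Wedge

variable {R M n : Type*} [CommRing R] [AddCommGroup M] [Module R M]

theorem ι_mul_ι_swap (a b : M) : ι R a * ι R b = -(ι R b * ι R a) :=
  eq_neg_of_add_eq_zero_left (ι_add_mul_swap a b)

theorem ι_mul_ι_mul_ι_mul_ι_comm (a b c d : M) :
    ι R a * ι R b * (ι R c * ι R d) = -(ι R a * ι R c * (ι R b * ι R d)) := by
  rw [mul_assoc, ← mul_assoc (ι R b), ι_mul_ι_swap b c]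
  simp only [neg_mul, mul_neg, mul_assoc]

variable [Fintype n]

variable (R) in
/-- The 2-form `∑ v_p ∧ w_p` pairing two families of 1-forms. It yields `-θs` and, after a complex
structure is applied to `w`, the forms `θ1`. -/
def wedgePairing (v w : n → M) : ExteriorAlgebra R M :=
  ∑ p, ι R (v p) * ι R (w p)

theorem wedgePairing_mul_self (v w : n → M) :
    wedgePairing R v w * wedgePairing R v w =
      -∑ p, ∑ q, ι R (v p) * ι R (v q) * (ι R (w p) * ι R (w q)) := by
  simp only [wedgePairing, Finset.sum_mul_sum, ι_mul_ι_mul_ι_mul_ι_comm (v _) (w _),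
    Finset.sum_neg_distrib]

theorem wedgePairing_mul_self_sub (v w w' : n → M) :
    wedgePairing R v w * wedgePairing R v w - wedgePairing R v w' * wedgePairing R v w' =
      ∑ p, ∑ q, ι R (v p) * ι R (v q) * (ι R (w' p) * ι R (w' q) - ι R (w p) * ι R (w q)) := by
  simp only [wedgePairing_mul_self, mul_sub, Finset.sum_sub_distrib]
  abel

end Wedge

section Cycle

variable {α : Type*}

/-- The cyclic permutation of the last three entries of a quadruple, which realises the cyclic
permutation of the quaternion units `i, j, k`. -/
def cycle (v : Fin 4 → α) : Fin 4 → α :=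
  ![v 0, v 2, v 3, v 1]

theorem cycle_cycle_cycle (v : Fin 4 → α) : cycle (cycle (cycle v)) = v := by
  ext p
  fin_cases p <;> rfl

end Cycle

section Quadruple

variable {R M : Type*} [CommRing R] [AddCommGroup M] [Module R M]

/-- The complex structure `I` on quadruples, with the signs for which
`θ1i = wedgePairing ℝ y (complexStructure x)`. -/
def complexStructure (v : Fin 4 → M) : Fin 4 → M :=
  ![v 1, -v 0, -v 3, v 2]

variable (R) in
/-- The Kähler form of `complexStructure`, normalised as half of
`wedgePairing R v (complexStructure v)`. It yields `θ0i` and `θ2i`, and after applying `cycle` to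
`v` also the `j` and `k` forms. -/
def kahlerForm (v : Fin 4 → M) : ExteriorAlgebra R M :=
  ι R (v 0) * ι R (v 1) - ι R (v 2) * ι R (v 3)

/-- The matrix of the complex structure `J`, whose entries are the coefficients of twice
`kahlerForm R (cycle v)`. -/
def matrixJ : Matrix (Fin 4) (Fin 4) ℤ :=
  !![0, 0, 1, 0; 0, 0, 0, 1; -1, 0, 0, 0; 0, -1, 0, 0]

/-- The matrix of the complex structure `K`, whose entries are the coefficients of twice
`kahlerForm R (cycle (cycle v))`. -/
def matrixK : Matrix (Fin 4) (Fin 4) ℤ :=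
  !![0, 0, 0, 1; 0, 0, -1, 0; 0, 1, 0, 0; -1, 0, 0, 0]

theorem wedgePairing_complexStructure (v w : Fin 4 → M) :
    wedgePairing R v (complexStructure w) =
      ι R (v 0) * ι R (w 1) - ι R (v 1) * ι R (w 0) + ι R (v 3) * ι R (w 2)
        - ι R (v 2) * ι R (w 3) := by
  simp only [wedgePairing, complexStructure, Fin.sum_univ_four, Matrix.cons_val, map_neg, mul_neg]
  abel

theorem wedgePairing_cycle (v w : Fin 4 → M) :
    wedgePairing R (cycle v) (cycle w) = wedgePairing R v w := by
  simp only [wedgePairing, cycle, Fin.sum_univ_four, Matrix.cons_val]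
  abel

theorem kahlerForm_cycle (v : Fin 4 → M) :
    kahlerForm R (cycle v) = ι R (v 0) * ι R (v 2) + ι R (v 1) * ι R (v 3) := by
  simp only [kahlerForm, cycle, Matrix.cons_val, ι_mul_ι_swap (v 3), sub_neg_eq_add]

theorem kahlerForm_cycle_cycle (v : Fin 4 → M) :
    kahlerForm R (cycle (cycle v)) = ι R (v 0) * ι R (v 3) - ι R (v 1) * ι R (v 2) :=
  rfl

theorem sum_matrixJ_smul_ι_mul_ι (v : Fin 4 → M) :
    ∑ p, ∑ q, matrixJ p q • (ι R (v p) * ι R (v q)) = 2 * kahlerForm R (cycle v) := by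
  simp only [matrixJ, kahlerForm_cycle, Fin.sum_univ_four, Matrix.of_apply, Matrix.cons_val,
    zero_smul, ι_mul_ι_swap (v 2) (v 0), ι_mul_ι_swap (v 3) (v 1), two_mul]
  abel

theorem sum_matrixK_smul_ι_mul_ι (v : Fin 4 → M) :
    ∑ p, ∑ q, matrixK p q • (ι R (v p) * ι R (v q)) = 2 * kahlerForm R (cycle (cycle v)) := by
  simp only [matrixK, kahlerForm_cycle_cycle, Fin.sum_univ_four, Matrix.of_apply, Matrix.cons_val,
    zero_smul, ι_mul_ι_swap (v 3) (v 0), ι_mul_ι_swap (v 2) (v 1), two_mul]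
  abel

theorem ι_mul_ι_sub_complexStructure (v : Fin 4 → M) (p q : Fin 4) :
    ι R (v p) * ι R (v q) - ι R (complexStructure v p) * ι R (complexStructure v q) =
      matrixJ p q • kahlerForm R (cycle v) + matrixK p q • kahlerForm R (cycle (cycle v)) := by
  rw [kahlerForm_cycle, kahlerForm_cycle_cycle]
  fin_cases p <;> fin_cases q <;>
    simp only [complexStructure, matrixJ, matrixK, Matrix.of_apply, Matrix.cons_val, Fin.zero_eta,
      Fin.mk_one, Fin.reduceFinMk, map_neg, zero_smul, neg_mul, mul_neg, ι_sq_zero,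
      ι_mul_ι_swap (v 1) (v 0), ι_mul_ι_swap (v 2) (v 0), ι_mul_ι_swap (v 3) (v 0),
      ι_mul_ι_swap (v 2) (v 1), ι_mul_ι_swap (v 3) (v 1), ι_mul_ι_swap (v 3) (v 2)] <;>
    abel

theorem wedgePairing_complexStructure_mul_self (v w : Fin 4 → M) :
    wedgePairing R v (complexStructure w) * wedgePairing R v (complexStructure w) =
      2 * (kahlerForm R (cycle v) * kahlerForm R (cycle w))
        + 2 * (kahlerForm R (cycle (cycle v)) * kahlerForm R (cycle (cycle w)))
        + wedgePairing R v w * wedgePairing R v w := by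
  rw [← sub_eq_iff_eq_add, wedgePairing_mul_self_sub, ← mul_assoc, ← mul_assoc,
    ← sum_matrixJ_smul_ι_mul_ι v, ← sum_matrixK_smul_ι_mul_ι v]
  simp only [ι_mul_ι_sub_complexStructure, mul_add, Finset.sum_add_distrib, Finset.sum_mul,
    mul_smul_comm, smul_mul_assoc]

end Quadruple

section Frame

/-- The quadruple `dx1, dx2, dx3, dx4` of vectors whose images under `ι` are the forms of the same
names. -/
def dx : Fin 4 → Fin 8 → ℝ :=
  ![Pi.single 0 1, Pi.single 1 1, Pi.single 2 1, Pi.single 3 1]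

/-- The quadruple `dy1, dy2, dy3, dy4`, encoded like `dx`. -/
def dy : Fin 4 → Fin 8 → ℝ :=
  ![Pi.single 4 1, Pi.single 5 1, Pi.single 6 1, Pi.single 7 1]

theorem θ0i_eq_kahlerForm : θ0i = kahlerForm ℝ dy := rfl

theorem θ0j_eq_kahlerForm : θ0j = kahlerForm ℝ (cycle dy) := (kahlerForm_cycle dy).symm

theorem θ0k_eq_kahlerForm : θ0k = kahlerForm ℝ (cycle (cycle dy)) := rfl

theorem θ2i_eq_kahlerForm : θ2i = kahlerForm ℝ dx := rfl

theorem θ2j_eq_kahlerForm : θ2j = kahlerForm ℝ (cycle dx) := (kahlerForm_cycle dx).symm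

theorem θ2k_eq_kahlerForm : θ2k = kahlerForm ℝ (cycle (cycle dx)) := rfl

theorem θ1i_eq_wedgePairing : θ1i = wedgePairing ℝ dy (complexStructure dx) :=
  (wedgePairing_complexStructure dy dx).symm

theorem θ1j_eq_wedgePairing : θ1j = wedgePairing ℝ (cycle dy) (complexStructure (cycle dx)) := by
  rw [wedgePairing_complexStructure]
  change dy1 * dx3 + dy2 * dx4 - dy3 * dx1 - dy4 * dx2 =
    dy1 * dx3 - dy3 * dx1 + dy2 * dx4 - dy4 * dx2
  abel

theorem θ1k_eq_wedgePairing :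
    θ1k = wedgePairing ℝ (cycle (cycle dy)) (complexStructure (cycle (cycle dx))) :=
  (wedgePairing_complexStructure (cycle (cycle dy)) (cycle (cycle dx))).symm

theorem θs_eq_neg_wedgePairing : θs = -wedgePairing ℝ dy dx := by
  rw [wedgePairing, Fin.sum_univ_four]
  rfl

end Frame

end QuaternionicForms

open QuaternionicForms

theorem theta1_squared_relation_general {R M : Type*} [CommRing R] [AddCommGroup M] [Module R M]
    (x y : Fin 4 → M) :
    (wedgePairing R y (complexStructure x) * wedgePairing R y (complexStructure x)
        - 2 * (kahlerForm R (cycle y) * kahlerForm R (cycle x))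
        - 2 * (kahlerForm R (cycle (cycle y)) * kahlerForm R (cycle (cycle x)))
        - wedgePairing R y x * wedgePairing R y x = 0) ∧
    (wedgePairing R (cycle y) (complexStructure (cycle x)) *
          wedgePairing R (cycle y) (complexStructure (cycle x))
        - 2 * (kahlerForm R (cycle (cycle y)) * kahlerForm R (cycle (cycle x)))
        - 2 * (kahlerForm R y * kahlerForm R x)
        - wedgePairing R y x * wedgePairing R y x = 0) ∧
    (wedgePairing R (cycle (cycle y)) (complexStructure (cycle (cycle x))) *
          wedgePairing R (cycle (cycle y)) (complexStructure (cycle (cycle x)))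
        - 2 * (kahlerForm R y * kahlerForm R x)
        - 2 * (kahlerForm R (cycle y) * kahlerForm R (cycle x))
        - wedgePairing R y x * wedgePairing R y x = 0) := by
  simp only [sub_sub, sub_eq_zero, wedgePairing_complexStructure_mul_self, wedgePairing_cycle,
    cycle_cycle_cycle, and_self]

theorem theta1_squared_relation :
    θ1i * θ1i - 2 * (θ0j * θ2j) - 2 * (θ0k * θ2k) - θs * θs = 0 ∧
    θ1j * θ1j - 2 * (θ0k * θ2k) - 2 * (θ0i * θ2i) - θs * θs = 0 ∧
    θ1k * θ1k - 2 * (θ0i * θ2i) - 2 * (θ0j * θ2j) - θs * θs = 0 := by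
  simpa only [θ0i_eq_kahlerForm, θ0j_eq_kahlerForm, θ0k_eq_kahlerForm, θ1i_eq_wedgePairing,
    θ1j_eq_wedgePairing, θ1k_eq_wedgePairing, θ2i_eq_kahlerForm, θ2j_eq_kahlerForm,
    θ2k_eq_kahlerForm, θs_eq_neg_wedgePairing, neg_mul_neg] using
      theta1_squared_relation_general (R := ℝ) dx dy

end
end

section
/- One has θ1i∧θ2j = −θ1j∧θ2i = −θ2k∧θs, and the identities obtained by cyclically permuting (i,j,k) hold as well: θ1j∧θ2k = −θ1k∧θ2j = −θ2i∧θs and θ1k∧θ2i = −θ1i∧θ2k = −θ2j∧θs. -/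
/-!
Attach to a quadruple `x` of 1-forms the 2-form `ω(x) = x₀ ∧ x₁ - x₂ ∧ x₃`. Rotating `x₁, x₂, x₃`
cyclically turns `ω(x) = θ2i` into `θ2j` and `θ2k`, and with the complex structure
`I x = (x₁, -x₀, -x₃, x₂)` one has `θ1i = ∑ yₐ ∧ (I x)ₐ`, while `θs = -∑ yₐ ∧ xₐ`. Hence
`θ1i ∧ θ2j = -θ2k ∧ θs` follows from the identities of 3-forms `(I x)ₐ ∧ θ2j = xₐ ∧ θ2k` and the
fact that 2-forms are central. The substitution `x ↦ (x₀, x₂, x₁, -x₃)`, applied to `y` as well,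
exchanges `i` and `j` and changes the sign of `θ2k`, which gives `θ1j ∧ θ2i = θ2k ∧ θs`. Permuting
`i, j, k` cyclically amounts to rotating `x₁, x₂, x₃` and `y₁, y₂, y₃`.
-/

noncomputable section

open ExteriorAlgebra

/-- A quadruple is read as a quaternion `x 0 + x 1 i + x 2 j + x 3 k`; this permutes its imaginary
coordinates cyclically, taking the forms with index `i, j, k` to those with index `j, k, i`. -/
def rotateIm {α : Type*} (x : Fin 4 → α) : Fin 4 → α := ![x 0, x 2, x 3, x 1]

theorem rotateIm_rotateIm_rotateIm {α : Type*} (x : Fin 4 → α) :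
    rotateIm (rotateIm (rotateIm x)) = x := by
  ext a
  fin_cases a <;> rfl

section Quadruples

variable {R M : Type*} [CommRing R] [AddCommGroup M] [Module R M]

theorem ι_mul_ι_eq_neg_swap (u v : M) : ι R u * ι R v = -(ι R v * ι R u) :=
  eq_neg_of_add_eq_zero_left (ι_add_mul_swap u v)

theorem ι_mul_ι_self_mul (u : M) (z : ExteriorAlgebra R M) : ι R u * (ι R u * z) = 0 := by
  rw [← mul_assoc, ι_sq_zero, zero_mul]

theorem ι_mul_ι_mul_eq_neg_swap (u v : M) (z : ExteriorAlgebra R M) :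
    ι R u * (ι R v * z) = -(ι R v * (ι R u * z)) := by
  rw [← mul_assoc, ι_mul_ι_eq_neg_swap, neg_mul, mul_assoc]

theorem ι_mul_ι_mul_ι_self (u v : M) : ι R u * (ι R v * ι R u) = 0 := by
  rw [ι_mul_ι_mul_eq_neg_swap, ι_sq_zero, mul_zero, neg_zero]

theorem ι_mul_ι_mul_ι_rotate (u v w : M) :
    ι R u * (ι R v * ι R w) = ι R v * (ι R w * ι R u) := by
  rw [ι_mul_ι_mul_eq_neg_swap, ι_mul_ι_eq_neg_swap u w, mul_neg, neg_neg]

theorem commute_ι_ι_mul_ι (u v w : M) : Commute (ι R u) (ι R v * ι R w) := by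
  rw [commute_iff_eq, ι_mul_ι_mul_ι_rotate, mul_assoc]

/-- The orientation-preserving substitution of imaginary coordinates that exchanges `i` and `j`
and takes `k` to `-k`. -/
def swapIm (x : Fin 4 → M) : Fin 4 → M := ![x 0, x 2, x 1, -x 3]

/-- The complex structure on quadruples belonging to the quaternion unit `i`. -/
def complexStructure (x : Fin 4 → M) : Fin 4 → M := ![x 1, -x 0, -x 3, x 2]

variable (R)

/-- The sum of the products `y a ∧ x a`; up to sign this is the form `θs`. -/
def wedgePairing (x y : Fin 4 → M) : ExteriorAlgebra R M := ∑ a, ι R (y a) * ι R (x a)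

/-- The 2-form in the `x a` alone belonging to the unit `i`, i.e. `θ2i`; the units `j` and `k` are
obtained by applying `rotateIm` to `x`. -/
def theta2 (x : Fin 4 → M) : ExteriorAlgebra R M := ι R (x 0) * ι R (x 1) - ι R (x 2) * ι R (x 3)

/-- The mixed 2-form belonging to the unit `i`, i.e. `θ1i`; the units `j` and `k` are obtained by
applying `rotateIm` to both `x` and `y`. -/
def theta1 (x y : Fin 4 → M) : ExteriorAlgebra R M := wedgePairing R (complexStructure x) y

/-- The form `θs`, which does not depend on a quaternion unit. -/
def thetaS (x y : Fin 4 → M) : ExteriorAlgebra R M := -wedgePairing R x y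

theorem theta1_eq_sub_sub_add (x y : Fin 4 → M) :
    theta1 R x y = ι R (y 0) * ι R (x 1) - ι R (y 1) * ι R (x 0) -
      ι R (y 2) * ι R (x 3) + ι R (y 3) * ι R (x 2) := by
  simp only [theta1, wedgePairing, complexStructure, Fin.sum_univ_four, Matrix.cons_val, map_neg,
    mul_neg, ← sub_eq_add_neg]

theorem thetaS_rotateIm (x y : Fin 4 → M) :
    thetaS R (rotateIm x) (rotateIm y) = thetaS R x y := by
  simp only [thetaS, wedgePairing, rotateIm, Fin.sum_univ_four, Matrix.cons_val]
  abel

theorem thetaS_swapIm (x y : Fin 4 → M) : thetaS R (swapIm x) (swapIm y) = thetaS R x y := by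
  simp only [thetaS, wedgePairing, swapIm, Fin.sum_univ_four, Matrix.cons_val, map_neg, neg_mul_neg]
  abel

theorem theta2_rotateIm_swapIm (x : Fin 4 → M) :
    theta2 R (rotateIm (swapIm x)) = theta2 R x := by
  simp only [theta2, swapIm, rotateIm, Matrix.cons_val, map_neg, neg_mul,
    ι_mul_ι_eq_neg_swap (x 3) (x 2), neg_neg]

theorem theta2_rotateIm_rotateIm_swapIm (x : Fin 4 → M) :
    theta2 R (rotateIm (rotateIm (swapIm x))) = -theta2 R (rotateIm (rotateIm x)) := by
  simp only [theta2, swapIm, rotateIm, Matrix.cons_val, map_neg, mul_neg,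
    ι_mul_ι_eq_neg_swap (x 2) (x 1)]
  abel

theorem theta1_swapIm (x y : Fin 4 → M) :
    theta1 R (swapIm x) (swapIm y) = theta1 R (rotateIm x) (rotateIm y) := by
  simp only [theta1_eq_sub_sub_add, swapIm, rotateIm, Matrix.cons_val, map_neg, mul_neg, neg_mul]
  abel

theorem commute_ι_theta2 (u : M) (x : Fin 4 → M) : Commute (ι R u) (theta2 R x) :=
  (commute_ι_ι_mul_ι u _ _).sub_right (commute_ι_ι_mul_ι u _ _)

theorem commute_wedgePairing_theta2 (x y z : Fin 4 → M) :
    Commute (wedgePairing R x y) (theta2 R z) :=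
  Commute.sum_left _ _ _ fun a _ =>
    (commute_ι_theta2 R (y a) z).mul_left (commute_ι_theta2 R (x a) z)

theorem ι_complexStructure_mul_theta2_rotateIm (x : Fin 4 → M) (a : Fin 4) :
    ι R (complexStructure x a) * theta2 R (rotateIm x) =
      ι R (x a) * theta2 R (rotateIm (rotateIm x)) := by
  fin_cases a
  all_goals simp only [complexStructure, theta2, rotateIm, Fin.zero_eta, Fin.mk_one,
    Fin.reduceFinMk, Matrix.cons_val, map_neg, neg_mul, mul_sub, ι_mul_ι_self_mul,
    ι_mul_ι_mul_ι_self, neg_zero, sub_zero, zero_sub, neg_neg]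
  · change ι R (x 1) * (ι R (x 0) * ι R (x 2)) = -(ι R (x 0) * (ι R (x 1) * ι R (x 2)))
    exact ι_mul_ι_mul_eq_neg_swap _ _ _
  · change ι R (x 0) * (ι R (x 3) * ι R (x 1)) = ι R (x 1) * (ι R (x 0) * ι R (x 3))
    exact (ι_mul_ι_mul_ι_rotate _ _ _).symm
  · change -(ι R (x 3) * (ι R (x 0) * ι R (x 2))) = ι R (x 2) * (ι R (x 0) * ι R (x 3))
    rw [ι_mul_ι_mul_ι_rotate (x 2), ι_mul_ι_mul_eq_neg_swap (x 3), neg_neg]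
  · change -(ι R (x 2) * (ι R (x 3) * ι R (x 1))) = -(ι R (x 3) * (ι R (x 1) * ι R (x 2)))
    rw [ι_mul_ι_mul_ι_rotate]

theorem theta1_mul_theta2_rotateIm (x y : Fin 4 → M) :
    theta1 R x y * theta2 R (rotateIm x) = -(theta2 R (rotateIm (rotateIm x)) * thetaS R x y) := by
  calc theta1 R x y * theta2 R (rotateIm x)
      = wedgePairing R x y * theta2 R (rotateIm (rotateIm x)) := by
        simp only [theta1, wedgePairing, Finset.sum_mul, mul_assoc,
          ι_complexStructure_mul_theta2_rotateIm]
    _ = theta2 R (rotateIm (rotateIm x)) * wedgePairing R x y :=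
        commute_wedgePairing_theta2 R x y _
    _ = -(theta2 R (rotateIm (rotateIm x)) * thetaS R x y) := by
        rw [thetaS, mul_neg, neg_neg]

theorem theta1_rotateIm_mul_theta2 (x y : Fin 4 → M) :
    theta1 R (rotateIm x) (rotateIm y) * theta2 R x =
      theta2 R (rotateIm (rotateIm x)) * thetaS R x y := by
  simpa only [theta1_swapIm, theta2_rotateIm_swapIm, theta2_rotateIm_rotateIm_swapIm,
    thetaS_swapIm, neg_mul, neg_neg] using theta1_mul_theta2_rotateIm R (swapIm x) (swapIm y)

theorem theta1_mul_theta2_rotateIm_eq_neg_swap (x y : Fin 4 → M) :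
    theta1 R x y * theta2 R (rotateIm x) =
      -(theta1 R (rotateIm x) (rotateIm y) * theta2 R x) := by
  rw [theta1_mul_theta2_rotateIm, theta1_rotateIm_mul_theta2]

theorem theta1_theta2_offdiag_general (x y : Fin 4 → M) :
    (theta1 R x y * theta2 R (rotateIm x) =
        -(theta1 R (rotateIm x) (rotateIm y) * theta2 R x) ∧
      theta1 R x y * theta2 R (rotateIm x) =
        -(theta2 R (rotateIm (rotateIm x)) * thetaS R x y)) ∧
    (theta1 R (rotateIm x) (rotateIm y) * theta2 R (rotateIm (rotateIm x)) =
        -(theta1 R (rotateIm (rotateIm x)) (rotateIm (rotateIm y)) * theta2 R (rotateIm x)) ∧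
      theta1 R (rotateIm x) (rotateIm y) * theta2 R (rotateIm (rotateIm x)) =
        -(theta2 R x * thetaS R x y)) ∧
    (theta1 R (rotateIm (rotateIm x)) (rotateIm (rotateIm y)) * theta2 R x =
        -(theta1 R x y * theta2 R (rotateIm (rotateIm x))) ∧
      theta1 R (rotateIm (rotateIm x)) (rotateIm (rotateIm y)) * theta2 R x =
        -(theta2 R (rotateIm x) * thetaS R x y)) := by
  have offdiag (x y : Fin 4 → M) :=
    And.intro (theta1_mul_theta2_rotateIm_eq_neg_swap R x y) (theta1_mul_theta2_rotateIm R x y)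
  refine ⟨offdiag x y, ?_, ?_⟩
  · simpa only [rotateIm_rotateIm_rotateIm, thetaS_rotateIm] using
      offdiag (rotateIm x) (rotateIm y)
  · simpa only [rotateIm_rotateIm_rotateIm, thetaS_rotateIm] using
      offdiag (rotateIm (rotateIm x)) (rotateIm (rotateIm y))

end Quadruples

/-- The covectors `dx1, …, dx4` as elements of the module generating the exterior algebra. -/
def dxCovector (a : Fin 4) : Fin 8 → ℝ := Pi.single (Fin.castAdd 4 a) 1

/-- The covectors `dy1, …, dy4` as elements of the module generating the exterior algebra. -/
def dyCovector (a : Fin 4) : Fin 8 → ℝ := Pi.single (Fin.natAdd 4 a) 1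

theorem θ2i_eq_theta2 : θ2i = theta2 ℝ dxCovector := rfl

theorem θ2j_eq_theta2 : θ2j = theta2 ℝ (rotateIm dxCovector) := by
  rw [θ2j, dx2, dx4, e8, e8, ι_mul_ι_eq_neg_swap, ← sub_eq_add_neg]
  rfl

theorem θ2k_eq_theta2 : θ2k = theta2 ℝ (rotateIm (rotateIm dxCovector)) := rfl

theorem θ1i_eq_theta1 : θ1i = theta1 ℝ dxCovector dyCovector := by
  rw [theta1_eq_sub_sub_add]
  exact add_sub_right_comm _ _ _

theorem θ1j_eq_theta1 : θ1j = theta1 ℝ (rotateIm dxCovector) (rotateIm dyCovector) := by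
  rw [theta1_eq_sub_sub_add]
  change dy1 * dx3 + dy2 * dx4 - dy3 * dx1 - dy4 * dx2 =
    dy1 * dx3 - dy3 * dx1 - dy4 * dx2 + dy2 * dx4
  abel

theorem θ1k_eq_theta1 :
    θ1k = theta1 ℝ (rotateIm (rotateIm dxCovector)) (rotateIm (rotateIm dyCovector)) := by
  rw [theta1_eq_sub_sub_add]
  exact add_sub_right_comm _ _ _

theorem θs_eq_thetaS : θs = thetaS ℝ dxCovector dyCovector := by
  rw [thetaS, wedgePairing, Fin.sum_univ_four]
  rfl

theorem theta1_theta2_offdiag :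
    (θ1i * θ2j = -(θ1j * θ2i) ∧ θ1i * θ2j = -(θ2k * θs)) ∧
    (θ1j * θ2k = -(θ1k * θ2j) ∧ θ1j * θ2k = -(θ2i * θs)) ∧
    (θ1k * θ2i = -(θ1i * θ2k) ∧ θ1k * θ2i = -(θ2j * θs)) := by
  rw [θ1i_eq_theta1, θ1j_eq_theta1, θ1k_eq_theta1, θ2i_eq_theta2, θ2j_eq_theta2, θ2k_eq_theta2,
    θs_eq_thetaS]
  exact theta1_theta2_offdiag_general ℝ dxCovector dyCovector

end
end

section
/- The Lefschetz decomposition identity θ0i∧θ2i = (1/4)·(θ1j∧θ1j + θ1k∧θ1k − θ1i∧θ1i − θs∧θs) holds, and the identities obtained by cyclically permuting (i,j,k) hold as well. -/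
/-!
Let `I`, `J`, `K` be the matrices of right multiplication by the quaternion units. The forms
`θ1i`, `θ1j`, `θ1k` and `-θs` are `∑ A p q dy_p ∧ dx_q` for `A = I, J, K, 1`, and the square of
such a form is governed by the second compound `Λ²A`. The compounds of `1` and `I` are the identity
on self-dual 2-forms of `ℝ⁴`, as are those of `J` and `K`, while on anti-self-dual forms `Λ²I` fixes
the form `ω` of `I` and negates those of `J` and `K`, and cyclically. Hence `Λ²1 + Λ²I - Λ²J - Λ²K`
is four times the projection onto `ω`, that is, a multiple of `ω ⊗ ω`, the tensor representing
`θ0i ∧ θ2i`.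
-/

noncomputable section

open ExteriorAlgebra

section WedgeForm

variable {R M m n : Type*} [CommRing R] [AddCommGroup M] [Module R M] [Fintype m] [Fintype n]

/-- The 2-form `∑ A p q u_p ∧ v_q` with coefficient matrix `A`, as a linear function of `A`. -/
def wedgeForm (u : m → M) (v : n → M) : Matrix m n R →ₗ[R] ExteriorAlgebra R M :=
  ∑ p, ∑ q, (Matrix.entryLinearMap R R p q).smulRight (ι R (u p) * ι R (v q))

lemma wedgeForm_apply (u : m → M) (v : n → M) (A : Matrix m n R) :
    wedgeForm u v A = ∑ p, ∑ q, A p q • (ι R (u p) * ι R (v q)) := by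
  simp [wedgeForm]

lemma wedgeForm_eq_sum_col (u : m → M) (v : n → M) (A : Matrix m n R) :
    wedgeForm u v A = ∑ r, ι R (Fintype.linearCombination R u (A.col r)) * ι R (v r) := by
  rw [wedgeForm_apply, Finset.sum_comm]
  simp only [Fintype.linearCombination_apply, map_sum, map_smul, Finset.sum_mul, smul_mul_assoc,
    Matrix.col_apply]

lemma wedgeForm_vecMulVec (u : m → M) (v : n → M) (a : m → R) (b : n → R) :
    wedgeForm u v (Matrix.vecMulVec a b) =
      ι R (Fintype.linearCombination R u a) * ι R (Fintype.linearCombination R v b) := by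
  simp only [wedgeForm_apply, Fintype.linearCombination_apply, map_sum, map_smul,
    Finset.sum_mul_sum, smul_mul_smul_comm, Matrix.vecMulVec_apply]

lemma wedgeForm_self_eq_zero_of_isSymm (u : m → M) {A : Matrix m m R} (hA : A.IsSymm) :
    wedgeForm u u A = 0 := by
  rw [wedgeForm_apply, ← Fintype.sum_prod_type']
  refine Finset.sum_involution (fun pq _ ↦ pq.swap) (fun pq _ ↦ ?_) (fun pq _ hne hpq ↦ hne ?_)
    (fun _ _ ↦ Finset.mem_univ _) (fun pq _ ↦ pq.swap_swap)
  · rw [Prod.fst_swap, Prod.snd_swap, hA.apply, ← smul_add, ι_add_mul_swap, smul_zero]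
  · rw [show pq.2 = pq.1 from congrArg Prod.fst hpq, ι_sq_zero, smul_zero]

lemma wedgeForm_self_mul_wedgeForm_self (u : m → M) (v : n → M) (A : Matrix m m R)
    (B : Matrix n n R) :
    wedgeForm u u A * wedgeForm v v B =
      ∑ r, ∑ s, wedgeForm u u (B r s • A) * (ι R (v r) * ι R (v s)) := by
  simp only [wedgeForm_apply v v, Finset.mul_sum, map_smul, mul_smul_comm, smul_mul_assoc]

lemma wedgeForm_mul_wedgeForm (u : m → M) (v : n → M) (A B : Matrix m n R) :
    wedgeForm u v A * wedgeForm u v B =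
      -∑ r, ∑ s, wedgeForm u u (Matrix.vecMulVec (A.col r) (B.col s)) *
        (ι R (v r) * ι R (v s)) := by
  simp only [wedgeForm_eq_sum_col u v, wedgeForm_vecMulVec, Finset.sum_mul_sum,
    ← Finset.sum_neg_distrib]
  exact Finset.sum_congr rfl fun _ _ ↦ Finset.sum_congr rfl fun _ _ ↦
    CliffordAlgebra.mul_ι_mul_ι_mul_comm_of_isOrtho _ (.all _ _) _

end WedgeForm

section LefschetzCoeff

variable {R n : Type*} [CommRing R] [DecidableEq n]

/-- The matrix of coefficients of `u_p ∧ u_q ∧ v_r ∧ v_s`, for fixed `r` and `s`, in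
`A(u,u) ∧ A(v,v) - B(u,v)² - C(u,v)² + A(u,v)² + 1(u,v)²`, where `A(u,v)` is `wedgeForm u v A`. -/
def lefschetzCoeff (A B C : Matrix n n R) (r s : n) : Matrix n n R :=
  A r s • A + Matrix.vecMulVec (B.col r) (B.col s) + Matrix.vecMulVec (C.col r) (C.col s)
    - Matrix.vecMulVec (A.col r) (A.col s)
    - Matrix.vecMulVec ((1 : Matrix n n R).col r) ((1 : Matrix n n R).col s)

lemma map_lefschetzCoeff {S : Type*} [CommRing S] (f : R →+* S) (A B C : Matrix n n R) (r s : n) :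
    (lefschetzCoeff A B C r s).map f = lefschetzCoeff (A.map f) (B.map f) (C.map f) r s := by
  ext p q
  simp [lefschetzCoeff, Matrix.vecMulVec_apply, Matrix.one_apply, apply_ite f]

theorem wedgeForm_mul_eq_of_isSymm_lefschetzCoeff [Fintype n] {M : Type*} [AddCommGroup M]
    [Module R M] (u v : n → M) {A B C : Matrix n n R}
    (h : ∀ r s, (lefschetzCoeff A B C r s).IsSymm) :
    wedgeForm u u A * wedgeForm v v A =
      wedgeForm u v B * wedgeForm u v B + wedgeForm u v C * wedgeForm u v C
        - wedgeForm u v A * wedgeForm u v A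
        - wedgeForm u v (1 : Matrix n n R) * wedgeForm u v (1 : Matrix n n R) := by
  have hzero : ∑ r, ∑ s, wedgeForm u u (lefschetzCoeff A B C r s) * (ι R (v r) * ι R (v s)) = 0 :=
    Finset.sum_eq_zero fun r _ ↦ Finset.sum_eq_zero fun s _ ↦ by
      rw [wedgeForm_self_eq_zero_of_isSymm u (h r s), zero_mul]
  simp only [lefschetzCoeff, map_add, map_sub, add_mul, sub_mul, Finset.sum_add_distrib,
    Finset.sum_sub_distrib] at hzero
  rw [wedgeForm_self_mul_wedgeForm_self]
  simp only [wedgeForm_mul_wedgeForm]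
  rw [← sub_eq_zero, ← hzero]
  abel

end LefschetzCoeff

section QuaternionUnit

open scoped Matrix

/-- The matrices of right multiplication by the quaternion units `i`, `j`, `k`, indexed by
`Fin 3` so that `a ↦ a + 1` is the cyclic permutation of the units. Row `p` holds the coordinates
of the product of the `p`-th element of the basis `1, i, j, k` with the unit. -/
def quaternionUnit (R : Type*) [Ring R] : Fin 3 → Matrix (Fin 4) (Fin 4) R :=
  ![!![0, 1, 0, 0; -1, 0, 0, 0; 0, 0, 0, -1; 0, 0, 1, 0],
    !![0, 0, 1, 0; 0, 0, 0, 1; -1, 0, 0, 0; 0, -1, 0, 0],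
    !![0, 0, 0, 1; 0, 0, -1, 0; 0, 1, 0, 0; -1, 0, 0, 0]]

lemma map_quaternionUnit {R S : Type*} [Ring R] [Ring S] (f : R →+* S) (a : Fin 3) :
    (quaternionUnit R a).map f = quaternionUnit S a := by
  ext p q
  fin_cases a <;> fin_cases p <;> fin_cases q <;> simp [quaternionUnit]

-- Antisymmetrizing `vecMulVec (A.col r) (A.col s)` gives the `2 × 2` minors of `A` in the columns
-- `r, s`, so for `a = 0` this is the identity `Λ²1 + Λ²I - Λ²J - Λ²K = 2 ω ⊗ ω`.
lemma isSymm_lefschetzCoeff_quaternionUnit (R : Type*) [CommRing R] (a : Fin 3) (r s : Fin 4) :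
    (lefschetzCoeff (quaternionUnit R a) (quaternionUnit R (a + 1)) (quaternionUnit R (a + 2))
      r s).IsSymm := by
  have h_int : ∀ (a : Fin 3) (r s : Fin 4),
      (lefschetzCoeff (quaternionUnit ℤ a) (quaternionUnit ℤ (a + 1)) (quaternionUnit ℤ (a + 2))
        r s)ᵀ =
      lefschetzCoeff (quaternionUnit ℤ a) (quaternionUnit ℤ (a + 1)) (quaternionUnit ℤ (a + 2))
        r s := by
    decide +kernel
  simpa only [map_lefschetzCoeff, map_quaternionUnit] using
    Matrix.IsSymm.map (h_int a r s) (Int.castRingHom R)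

variable {R M : Type*} [CommRing R] [AddCommGroup M] [Module R M]

lemma wedgeForm_quaternionUnit (u v : Fin 4 → M) (a : Fin 3) :
    wedgeForm u v (quaternionUnit R a) =
      ![ι R (u 0) * ι R (v 1) - ι R (u 1) * ι R (v 0)
          + ι R (u 3) * ι R (v 2) - ι R (u 2) * ι R (v 3),
        ι R (u 0) * ι R (v 2) + ι R (u 1) * ι R (v 3)
          - ι R (u 2) * ι R (v 0) - ι R (u 3) * ι R (v 1),
        ι R (u 0) * ι R (v 3) - ι R (u 3) * ι R (v 0)
          + ι R (u 2) * ι R (v 1) - ι R (u 1) * ι R (v 2)] a := by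
  fin_cases a <;>
  · simp only [wedgeForm_apply, quaternionUnit, Fin.sum_univ_four, Fin.zero_eta, Fin.mk_one,
      Fin.reduceFinMk, Fin.isValue, Matrix.of_apply, Matrix.cons_val]
    module

lemma wedgeForm_self_quaternionUnit (u : Fin 4 → M) (a : Fin 3) :
    wedgeForm u u (quaternionUnit R a) = (2 : R) •
      ![ι R (u 0) * ι R (u 1) - ι R (u 2) * ι R (u 3),
        ι R (u 0) * ι R (u 2) + ι R (u 1) * ι R (u 3),
        ι R (u 0) * ι R (u 3) - ι R (u 1) * ι R (u 2)] a := by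
  have hswap (p q : Fin 4) : ι R (u p) * ι R (u q) = -(ι R (u q) * ι R (u p)) :=
    CliffordAlgebra.ι_mul_ι_comm_of_isOrtho (.all _ _)
  rw [wedgeForm_quaternionUnit, hswap 1 0, hswap 2 0, hswap 3 0, hswap 2 1, hswap 3 1, hswap 3 2]
  fin_cases a <;>
  · simp only [Fin.zero_eta, Fin.mk_one, Fin.reduceFinMk, Fin.isValue, Matrix.cons_val]
    module

end QuaternionUnit

theorem lefschetz_decomposition_theta0_theta2_general {R M : Type*} [CommRing R] [AddCommGroup M]
    [Module R M] (y x : Fin 4 → M) (a : Fin 3) :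
    wedgeForm y y (quaternionUnit R a) * wedgeForm x x (quaternionUnit R a) =
      wedgeForm y x (quaternionUnit R (a + 1)) * wedgeForm y x (quaternionUnit R (a + 1))
        + wedgeForm y x (quaternionUnit R (a + 2)) * wedgeForm y x (quaternionUnit R (a + 2))
        - wedgeForm y x (quaternionUnit R a) * wedgeForm y x (quaternionUnit R a)
        - wedgeForm y x (1 : Matrix (Fin 4) (Fin 4) R) *
          wedgeForm y x (1 : Matrix (Fin 4) (Fin 4) R) :=
  wedgeForm_mul_eq_of_isSymm_lefschetzCoeff y x (isSymm_lefschetzCoeff_quaternionUnit R a)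

section BasePoint

/-- The vectors of `ℝ⁸` whose images under `ι ℝ` are `dx1, dx2, dx3, dx4`; like every generator of
the exterior algebra here, they stand for covectors. -/
def dxVec (p : Fin 4) : Fin 8 → ℝ := Pi.single (Fin.castAdd 4 p) 1

/-- The vectors of `ℝ⁸` whose images under `ι ℝ` are `dy1, dy2, dy3, dy4`. -/
def dyVec (p : Fin 4) : Fin 8 → ℝ := Pi.single (Fin.natAdd 4 p) 1

lemma ι_dxVec (p : Fin 4) : ι ℝ (dxVec p) = ![dx1, dx2, dx3, dx4] p := by
  fin_cases p <;> rfl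

lemma ι_dyVec (p : Fin 4) : ι ℝ (dyVec p) = ![dy1, dy2, dy3, dy4] p := by
  fin_cases p <;> rfl

lemma wedgeForm_dyVec_dxVec_quaternionUnit (a : Fin 3) :
    wedgeForm dyVec dxVec (quaternionUnit ℝ a) = ![θ1i, θ1j, θ1k] a := by
  rw [wedgeForm_quaternionUnit]
  simp only [ι_dxVec, ι_dyVec]
  rfl

lemma wedgeForm_dyVec_dxVec_one :
    wedgeForm dyVec dxVec (1 : Matrix (Fin 4) (Fin 4) ℝ) = -θs := by
  simp [wedgeForm_apply, Matrix.one_apply, Fin.sum_univ_four, ι_dxVec, ι_dyVec, θs]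

lemma wedgeForm_dyVec_self_quaternionUnit (a : Fin 3) :
    wedgeForm dyVec dyVec (quaternionUnit ℝ a) = (2 : ℝ) • ![θ0i, θ0j, θ0k] a := by
  rw [wedgeForm_self_quaternionUnit]
  simp only [ι_dyVec]
  rfl

lemma wedgeForm_dxVec_self_quaternionUnit (a : Fin 3) :
    wedgeForm dxVec dxVec (quaternionUnit ℝ a) = (2 : ℝ) • ![θ2i, θ2j, θ2k] a := by
  rw [wedgeForm_self_quaternionUnit]
  simp only [ι_dxVec]
  rfl

lemma theta0_mul_theta2_cyclic (a : Fin 3) :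
    ![θ0i, θ0j, θ0k] a * ![θ2i, θ2j, θ2k] a = (1 / 4 : ℝ) •
      (![θ1i, θ1j, θ1k] (a + 1) * ![θ1i, θ1j, θ1k] (a + 1)
        + ![θ1i, θ1j, θ1k] (a + 2) * ![θ1i, θ1j, θ1k] (a + 2)
        - ![θ1i, θ1j, θ1k] a * ![θ1i, θ1j, θ1k] a - θs * θs) := by
  have h := lefschetz_decomposition_theta0_theta2_general (R := ℝ) dyVec dxVec a
  simp only [wedgeForm_dyVec_self_quaternionUnit, wedgeForm_dxVec_self_quaternionUnit,
    wedgeForm_dyVec_dxVec_quaternionUnit, wedgeForm_dyVec_dxVec_one, neg_mul_neg] at h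
  rw [← h, smul_mul_smul_comm]
  module

end BasePoint

theorem lefschetz_decomposition_theta0_theta2 :
    θ0i * θ2i = (1 / 4 : ℝ) • (θ1j * θ1j + θ1k * θ1k - θ1i * θ1i - θs * θs) ∧
    θ0j * θ2j = (1 / 4 : ℝ) • (θ1k * θ1k + θ1i * θ1i - θ1j * θ1j - θs * θs) ∧
    θ0k * θ2k = (1 / 4 : ℝ) • (θ1i * θ1i + θ1j * θ1j - θ1k * θ1k - θs * θs) :=
  ⟨theta0_mul_theta2_cyclic 0, theta0_mul_theta2_cyclic 1, theta0_mul_theta2_cyclic 2⟩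

end
end

section
/- Let n, k, a, b be natural numbers with k ≥ 1, 2k + 1 ≤ n, a ≥ 2, and 1 ≤ b ≤ k. Define λ_1 = a, λ_j = 2 for 2 ≤ j ≤ b, and λ_j = 0 for b < j ≤ k. Then the product over j = 1, …, k of Γ((λ_j+k+1−j)/2)·Γ((λ_j+n−k−j)/2) / ( Γ((λ_j+k+2−j)/2)·Γ((λ_j+n−k+1−j)/2) ) equals [Γ((a+k)/2)·Γ((a+n−k−1)/2) / (Γ((a+k+1)/2)·Γ((a+n−k)/2))] · [Γ(1/2)·Γ((n−2k)/2) / (Γ((k+2)/2)·Γ((n−k+1)/2))] · (k−b+1)·(n−k−b)/4, where Γ denotes the real Gamma function. (All Gamma arguments occurring are positive under the stated hypotheses.) -/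
/-!
The `j`-th factor is a product of two quotients `Γ((λ_j + c - j) / 2) / Γ((λ_j + c + 1 - j) / 2)`,
with `c = k + 1` and `c = n - k`, so it suffices to evaluate the product of such quotients for one
`c`. While `λ_j` is constant it telescopes. The blocks `λ_j = 2` and `λ_j = 0` meet at `j = b`,
where they leave `Γ((c - b) / 2 + 1) / Γ((c - b) / 2) = (c - b) / 2`.
-/

open Real

/-- The highest weight `λ = (a, 2, …, 2, 0, …, 0)` with `b` nonzero entries:
`λ_1 = a`, `λ_j = 2` for `2 ≤ j ≤ b`, and `λ_j = 0` for `j > b`. -/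
noncomputable def hwt (a b : ℕ) (j : ℕ) : ℝ :=
  if j = 1 then (a : ℝ) else if j ≤ b then 2 else 0

lemma hwt_one (a b : ℕ) : hwt a b 1 = a := if_pos rfl

lemma hwt_of_le {a b j : ℕ} (hj : 1 < j) (hjb : j ≤ b) : hwt a b j = 2 := by
  rw [hwt, if_neg hj.ne', if_pos hjb]

lemma hwt_of_lt {a b j : ℕ} (hb : 1 ≤ b) (hbj : b < j) : hwt a b j = 0 := by
  rw [hwt, if_neg (hb.trans_lt hbj).ne', if_neg hbj.not_ge]

lemma prod_Ioc_Gamma_half_div {l m : ℕ} {c : ℝ} (hlm : l ≤ m) (hm : m < c) :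
    ∏ j ∈ Finset.Ioc l m, Gamma ((c - j) / 2) / Gamma ((c + 1 - j) / 2) =
      Gamma ((c - m) / 2) / Gamma ((c - l) / 2) := by
  have Gamma_ne_zero {i : ℕ} (hi : i ≤ m) : Gamma ((c - i) / 2) ≠ 0 := by
    have : (i : ℝ) ≤ m := mod_cast hi
    exact (Gamma_pos_of_pos (by linarith)).ne'
  induction m, hlm using Nat.le_induction with
  | base => rw [Finset.Ioc_self, Finset.prod_empty, div_self (Gamma_ne_zero le_rfl)]
  | succ m hlm ih =>
    have hm' : (m : ℝ) < c := by push_cast at hm; linarith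
    have shift : c + 1 - (m + 1 : ℕ) = c - m := by push_cast; ring
    rw [Finset.prod_Ioc_succ_top hlm, ih hm' fun hi => Gamma_ne_zero (hi.trans m.le_succ), shift,
      mul_comm, div_mul_div_cancel₀ (Gamma_ne_zero m.le_succ)]

lemma prod_hwt_Gamma_half_div (a : ℕ) {b k : ℕ} {c : ℝ} (hb : 1 ≤ b) (hbk : b ≤ k) (hk : k < c) :
    ∏ j ∈ Finset.Icc 1 k, Gamma ((hwt a b j + c - j) / 2) / Gamma ((hwt a b j + c + 1 - j) / 2) =
      Gamma ((a + c - 1) / 2) / Gamma ((a + c) / 2) *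
        (Gamma ((c - k) / 2) / Gamma ((c + 1) / 2)) * ((c - b) / 2) := by
  set F : ℕ → ℝ := fun j => Gamma ((hwt a b j + c - j) / 2) / Gamma ((hwt a b j + c + 1 - j) / 2)
  have hbc : (b : ℝ) < c := lt_of_le_of_lt (mod_cast hbk) hk
  have hpos : 0 < (c - b) / 2 := by linarith
  have first : F 1 = Gamma ((a + c - 1) / 2) / Gamma ((a + c) / 2) := by
    simp only [F, hwt_one, Nat.cast_one, add_sub_cancel_right]
  have twos : ∏ j ∈ Finset.Ioc 1 b, F j =
      (c - b) / 2 * Gamma ((c - b) / 2) / Gamma ((c + 1) / 2) := by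
    calc ∏ j ∈ Finset.Ioc 1 b, F j
        = ∏ j ∈ Finset.Ioc 1 b, Gamma ((2 + c - j) / 2) / Gamma ((2 + c + 1 - j) / 2) :=
          Finset.prod_congr rfl fun j hj => by
            simp only [F, hwt_of_le (Finset.mem_Ioc.mp hj).1 (Finset.mem_Ioc.mp hj).2]
      _ = Gamma ((2 + c - b) / 2) / Gamma ((2 + c - (1 : ℕ)) / 2) :=
          prod_Ioc_Gamma_half_div hb (by linarith)
      _ = Gamma ((c - b) / 2 + 1) / Gamma ((c + 1) / 2) := by
          congr 2 <;> push_cast <;> ring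
      _ = (c - b) / 2 * Gamma ((c - b) / 2) / Gamma ((c + 1) / 2) := by
          rw [Gamma_add_one hpos.ne']
  have zeros : ∏ j ∈ Finset.Ioc b k, F j = Gamma ((c - k) / 2) / Gamma ((c - b) / 2) := by
    rw [← prod_Ioc_Gamma_half_div hbk hk]
    refine Finset.prod_congr rfl fun j hj => ?_
    simp only [F, hwt_of_lt hb (Finset.mem_Ioc.mp hj).1, zero_add]
  have hΓ : Gamma ((c - b) / 2) ≠ 0 := (Gamma_pos_of_pos hpos).ne'
  calc ∏ j ∈ Finset.Icc 1 k, F j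
      = F 1 * ((∏ j ∈ Finset.Ioc 1 b, F j) * ∏ j ∈ Finset.Ioc b k, F j) := by
        rw [Finset.prod_Ioc_consecutive _ hb hbk, Finset.mul_prod_Ioc_eq_prod_Icc (hb.trans hbk)]
    _ = _ := by
        rw [first, twos, zeros]
        field_simp

theorem gamma_quotient_telescoping_general (a : ℕ) {b k : ℕ} {n : ℝ} (hb : 1 ≤ b) (hbk : b ≤ k)
    (hn : 2 * k < n) :
    (∏ j ∈ Finset.Icc 1 k,
        Gamma ((hwt a b j + k + 1 - j) / 2) * Gamma ((hwt a b j + n - k - j) / 2) /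
          (Gamma ((hwt a b j + k + 2 - j) / 2) * Gamma ((hwt a b j + n - k + 1 - j) / 2))) =
      Gamma ((a + k) / 2) * Gamma ((a + n - k - 1) / 2) /
          (Gamma ((a + k + 1) / 2) * Gamma ((a + n - k) / 2)) *
        (Gamma (1 / 2) * Gamma ((n - 2 * k) / 2) /
          (Gamma ((k + 2) / 2) * Gamma ((n - k + 1) / 2))) *
        ((k - b + 1) * (n - k - b) / 4) := by
  have prod_succ_k := prod_hwt_Gamma_half_div a hb hbk (lt_add_one (k : ℝ))
  have prod_n_sub_k := prod_hwt_Gamma_half_div a hb hbk (show (k : ℝ) < n - k by linarith)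
  calc _ = ∏ j ∈ Finset.Icc 1 k,
        (Gamma ((hwt a b j + (k + 1) - j) / 2) / Gamma ((hwt a b j + (k + 1) + 1 - j) / 2)) *
          (Gamma ((hwt a b j + (n - k) - j) / 2) / Gamma ((hwt a b j + (n - k) + 1 - j) / 2)) :=
        Finset.prod_congr rfl fun j _ => by
          rw [mul_div_mul_comm]
          ring_nf
    _ = _ := by
        rw [Finset.prod_mul_distrib, prod_succ_k, prod_n_sub_k]
        ring_nf

theorem gamma_quotient_telescoping (n k a b : ℕ) (hk : 1 ≤ k) (hn : 2 * k + 1 ≤ n)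
    (ha : 2 ≤ a) (hb1 : 1 ≤ b) (hbk : b ≤ k) :
    (∏ j ∈ Finset.Icc 1 k,
        Real.Gamma ((hwt a b j + k + 1 - j) / 2) * Real.Gamma ((hwt a b j + n - k - j) / 2) /
          (Real.Gamma ((hwt a b j + k + 2 - j) / 2) *
            Real.Gamma ((hwt a b j + n - k + 1 - j) / 2))) =
      Real.Gamma ((a + k) / 2) * Real.Gamma ((a + n - k - 1) / 2) /
          (Real.Gamma ((a + k + 1) / 2) * Real.Gamma ((a + n - k) / 2)) *
        (Real.Gamma (1 / 2) * Real.Gamma ((n - 2 * k) / 2) /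
          (Real.Gamma ((k + 2) / 2) * Real.Gamma ((n - k + 1) / 2))) *
        (((k : ℝ) - b + 1) * ((n : ℝ) - k - b) / 4) := by
  exact gamma_quotient_telescoping_general a hb1 hbk (mod_cast hn)
end
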